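/- arXiv:2109.01315 — 12 statements merged into one kernel-verified Lean document; each statement's English description precedes it below -/
import Mathlib

section
/- Let A be a densely defined closed operator on a complex Hilbert space H with closed range. Then R(A) = R(A*) if and only if N(A) = N(A*). -/
open scoped InnerProductSpace
open LinearPMap

noncomputable section

variable {H : Type*} [NormedAddCommGroup H] [InnerProductSpace ℂ H] [CompleteSpace H]

/-- The range `R(A)` of a partially defined operator, as a submodule of `H`. -/
def LinearPMap.ran (A : H →ₗ.[ℂ] H) : Submodule ℂ H :=
  LinearMap.range A.toFun

/-- The null space `N(A)` of a partially defined operator, as a submodule of `H`. -/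
def LinearPMap.nul (A : H →ₗ.[ℂ] H) : Submodule ℂ H :=
  (LinearMap.ker A.toFun).map A.domain.subtype

theorem aux_mem_nul' (A : H →ₗ.[ℂ] H) (x : H) : x ∈ A.nul ↔ (x, (0 : H)) ∈ A.graph := by
  simp [LinearPMap.nul, LinearPMap.mem_graph_iff]

theorem aux_mem_ran' (A : H →ₗ.[ℂ] H) (y : H) : y ∈ A.ran ↔ ∃ x, (x, y) ∈ A.graph := by
  simp [LinearPMap.ran, LinearPMap.mem_graph_iff]

theorem aux_mem_adj' (A : H →ₗ.[ℂ] H) (hd : Dense (A.domain : Set H)) (y w : H) :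
    (y, w) ∈ A.adjoint.graph ↔ ∀ a b, (a, b) ∈ A.graph → ⟪w, a⟫_ℂ = ⟪y, b⟫_ℂ := by
  constructor
  · intro h a b hab
    obtain ⟨y', h1, h2⟩ := (LinearPMap.mem_graph_iff _).1 h
    obtain ⟨a', h3, h4⟩ := (LinearPMap.mem_graph_iff _).1 hab
    simp only at h1 h2 h3 h4
    subst h1 h2 h3 h4
    exact LinearPMap.adjoint_isFormalAdjoint hd y' a'
  · intro h
    have h' : ∀ x : A.domain, ⟪w, (x : H)⟫_ℂ = ⟪y, A x⟫_ℂ := fun x => h _ _ (A.mem_graph x)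
    have hy : y ∈ A.adjoint.domain := LinearPMap.mem_adjoint_domain_of_exists y ⟨w, h'⟩
    exact (LinearPMap.mem_graph_iff _).2 ⟨⟨y, hy⟩, rfl, LinearPMap.adjoint_apply_eq hd ⟨y, hy⟩ h'⟩

theorem aux_nul_adj' (A : H →ₗ.[ℂ] H) (hd : Dense (A.domain : Set H)) :
    A.adjoint.nul = A.ranᗮ := by
  ext y
  rw [aux_mem_nul', aux_mem_adj' A hd, Submodule.mem_orthogonal']
  simp only [aux_mem_ran', inner_zero_left]
  exact ⟨fun h b ⟨a, hab⟩ => (h a b hab).symm, fun h a b hab => (h b ⟨a, hab⟩).symm⟩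

theorem aux_nul_closed' (A : H →ₗ.[ℂ] H) (hc : A.IsClosed) :
    IsClosed (A.nul : Set H) := by
  have : (A.nul : Set H) = (fun x : H => (x, (0 : H))) ⁻¹' (A.graph : Set (H × H)) := by
    ext x
    exact aux_mem_nul' A x
  rw [this]
  exact IsClosed.preimage (by fun_prop) hc

theorem aux_ran_adj' (A : H →ₗ.[ℂ] H) (hd : Dense (A.domain : Set H)) (hc : A.IsClosed)
    (hr : IsClosed (A.ran : Set H)) : A.adjoint.ran = A.nulᗮ := by
  ext z
  rw [aux_mem_ran', Submodule.mem_orthogonal']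
  constructor
  · rintro ⟨y, hy⟩ x hx
    rw [aux_mem_nul'] at hx
    simpa using (aux_mem_adj' A hd y z).1 hy x 0 hx
  · intro hz
    have : CompleteSpace A.graph := IsClosed.completeSpace_coe (hs := hc)
    have : CompleteSpace A.ran := IsClosed.completeSpace_coe (hs := hr)
    let T : A.graph →L[ℂ] A.ran :=
      ((ContinuousLinearMap.snd ℂ H H).comp A.graph.subtypeL).codRestrict A.ran
        (fun g => (aux_mem_ran' A _).2 ⟨g.1.1, g.2⟩)
    have hT : ∀ g, ((T g : A.ran) : H) = g.1.2 := fun g => rfl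
    have hs : T.range = ⊤ := by
      rw [LinearMap.range_eq_top]
      rintro ⟨y, hy⟩
      obtain ⟨x, hx⟩ := (aux_mem_ran' A _).1 hy
      exact ⟨⟨(x, y), hx⟩, rfl⟩
    obtain ⟨f, -⟩ := T.exists_nonlinearRightInverse_of_surjective hs
    have key : ∀ g g' : A.graph, T g = T g' → ⟪z, g.1.1⟫_ℂ = ⟪z, g'.1.1⟫_ℂ := by
      intro g g' h
      have h2 : g.1.2 = g'.1.2 := by rw [← hT, ← hT, h]
      rw [← sub_eq_zero, ← inner_sub_right]
      apply hz
      rw [aux_mem_nul']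
      have := A.graph.sub_mem g.2 g'.2
      have e : (g.1 - g'.1 : H × H) = (g.1.1 - g'.1.1, 0) := by
        ext <;> simp [h2]
      rwa [e] at this
    let ψ₀ : A.ran →ₗ[ℂ] ℂ :=
      { toFun := fun y => ⟪z, (f y).1.1⟫_ℂ
        map_add' := fun a b => by
          rw [key (f (a + b)) (f a + f b) ((f.right_inv _).trans (by rw [T.map_add]; exact congrArg₂ (· + ·) (f.right_inv a).symm (f.right_inv b).symm))]
          simp [inner_add_right]
        map_smul' := fun c a => by
          rw [key (f (c • a)) (c • f a) ((f.right_inv _).trans (by rw [T.map_smul]; exact congrArg (c • ·) (f.right_inv a).symm))]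
          simp [inner_smul_right] }
    let ψ : A.ran →L[ℂ] ℂ := ψ₀.mkContinuous (‖z‖ * f.nnnorm) (fun y => by
      calc ‖⟪z, (f y).1.1⟫_ℂ‖ ≤ ‖z‖ * ‖(f y).1.1‖ := norm_inner_le_norm _ _
        _ ≤ ‖z‖ * (f.nnnorm * ‖y‖) := by
          gcongr
          exact (norm_fst_le (f y).1).trans (f.bound y)
        _ = _ := by ring)
    refine ⟨((InnerProductSpace.toDual ℂ A.ran).symm ψ : A.ran), ?_⟩
    rw [aux_mem_adj' A hd]
    intro a b hab
    have hb : b ∈ A.ran := (aux_mem_ran' A _).2 ⟨a, hab⟩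
    have h1 : ⟪(InnerProductSpace.toDual ℂ A.ran).symm ψ, (⟨b, hb⟩ : A.ran)⟫_ℂ = ψ ⟨b, hb⟩ :=
      InnerProductSpace.toDual_symm_apply
    rw [Submodule.coe_inner] at h1
    rw [h1]
    exact key ⟨(a, b), hab⟩ (f ⟨b, hb⟩) (by rw [f.right_inv]; rfl)

theorem stmt0 (A : H →ₗ.[ℂ] H) (hd : Dense (A.domain : Set H)) (hc : A.IsClosed)
    (hr : IsClosed (A.ran : Set H)) :
    A.ran = A.adjoint.ran ↔ A.nul = A.adjoint.nul := by
  have : CompleteSpace A.ran := IsClosed.completeSpace_coe (hs := hr)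
  have : CompleteSpace A.nul := IsClosed.completeSpace_coe (hs := aux_nul_closed' A hc)
  rw [aux_ran_adj' A hd hc hr, aux_nul_adj' A hd]
  constructor
  · intro h
    rw [h, Submodule.orthogonal_orthogonal]
  · intro h
    rw [h, Submodule.orthogonal_orthogonal]
end
end

section
/- Let A be a densely defined closed operator on a complex Hilbert space H with closed range, and let B be the Moore–Penrose inverse of A. Then R(A) = R(A*) if and only if A(Bx) = B(Ax) for every x ∈ D(A). -/
open scoped InnerProductSpace
open LinearPMap

noncomputable section

variable {H : Type*} [NormedAddCommGroup H] [InnerProductSpace ℂ H] [CompleteSpace H]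

/-- `B : H →L[ℂ] H` is the Moore–Penrose inverse of the densely defined closed
operator `A` with closed range: for every `y ∈ H`, `B y ∈ D(A)`, `B y ⟂ N(A)`,
`A (B y) = Q y` where `Q` is the orthogonal projection onto `R(A)` (expressed as
`y - A (B y) ∈ R(A)ᗮ`), and `B (A x) = P x` where `P` is the orthogonal projection
onto `N(A)ᗮ` (expressed as `x - B (A x) ∈ (N(A)ᗮ)ᗮ`, while `B (A x) ∈ N(A)ᗮ` is part
of the second condition). -/
def IsMPInv (A : H →ₗ.[ℂ] H) (B : H →L[ℂ] H) : Prop :=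
  (∀ y : H, B y ∈ A.domain) ∧
  (∀ y : H, B y ∈ A.nulᗮ) ∧
  (∀ (y : H) (hy : B y ∈ A.domain), y - A ⟨B y, hy⟩ ∈ A.ranᗮ) ∧
  (∀ x : A.domain, (x : H) - B (A x) ∈ A.nulᗮᗮ)

theorem ran_adjoint_eq (A : H →ₗ.[ℂ] H) (hd : Dense (A.domain : Set H))
    (B : H →L[ℂ] H) (hB : IsMPInv A B) : A.adjoint.ran = A.nulᗮ := by
  apply le_antisymm
  · rintro w ⟨y, rfl⟩
    rw [Submodule.mem_orthogonal']
    rintro n ⟨u, hu, rfl⟩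
    have h := adjoint_isFormalAdjoint hd y u
    have hu' : A u = 0 := hu
    rw [hu', inner_zero_right] at h
    exact h
  · intro w hw
    have key : ∀ x : A.domain,
        inner ℂ w (x : H) = inner ℂ (ContinuousLinearMap.adjoint B w) (A x) := by
      intro x
      rw [ContinuousLinearMap.adjoint_inner_left]
      have h := Submodule.inner_right_of_mem_orthogonal hw (hB.2.2.2 x)
      rw [inner_sub_right] at h
      exact sub_eq_zero.mp h
    have hy : ContinuousLinearMap.adjoint B w ∈ A.adjoint.domain :=
      mem_adjoint_domain_of_exists _ ⟨w, key⟩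
    exact ⟨⟨_, hy⟩, adjoint_apply_eq hd ⟨_, hy⟩ key⟩

/-- Let `A` be a densely defined closed operator on a complex Hilbert
space `H` with closed range and let `B` be the Moore–Penrose inverse of `A`. Then
`R(A) = R(A*)` if and only if `A (B x) = B (A x)` for every `x ∈ D(A)`. -/
theorem stmt4 (A : H →ₗ.[ℂ] H) (hd : Dense (A.domain : Set H)) (hc : A.IsClosed)
    (hr : IsClosed (A.ran : Set H)) (B : H →L[ℂ] H) (hB : IsMPInv A B) :
    A.ran = A.adjoint.ran ↔
      ∀ x : A.domain, A ⟨B (x : H), hB.1 (x : H)⟩ = B (A x) := by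
  rw [ran_adjoint_eq A hd B hB]
  haveI : CompleteSpace A.ran := hr.completeSpace_coe
  have hQ : ∀ x : H, A.ran.starProjection x = A ⟨B x, hB.1 x⟩ := fun x =>
    Submodule.eq_starProjection_of_mem_orthogonal ⟨_, rfl⟩ (hB.2.2.1 x (hB.1 x))
  have hP : ∀ x : A.domain, A.nulᗮ.starProjection (x : H) = B (A x) := fun x =>
    Submodule.eq_starProjection_of_mem_orthogonal (hB.2.1 _) (hB.2.2.2 x)
  constructor
  · intro h x
    rw [← hQ, ← hP]
    congr 2
  · intro h
    have e : (A.ran.starProjection : H → H) = A.nulᗮ.starProjection := by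
      refine Continuous.ext_on hd (ContinuousLinearMap.continuous _)
        (ContinuousLinearMap.continuous _) ?_
      intro x hx
      rw [hQ x, hP ⟨x, hx⟩]
      exact h ⟨x, hx⟩
    ext x
    rw [← Submodule.starProjection_eq_self_iff, ← Submodule.starProjection_eq_self_iff, e]
end
end

section
/- Let A be a densely defined closed operator on a complex Hilbert space H which is EP. Then the operator AA*, defined by y ↦ A(A*y) on the domain {y ∈ D(A*) : A*y ∈ D(A)}, is a densely defined closed operator which is EP; moreover R(AA*) = R(A) and R(AA*) is closed. -/
open scoped InnerProductSpace
open LinearPMap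

noncomputable section

variable {H : Type*} [NormedAddCommGroup H] [InnerProductSpace ℂ H] [CompleteSpace H]

theorem aux_decomp (A : H →ₗ.[ℂ] H) (hd : Dense (A.domain : Set H)) (hc : A.IsClosed) (a b : H) :
    ∃ (x : A.domain) (v : A.adjoint.domain),
      a = (x : H) - A.adjoint v ∧ b = A x + (v : H) := by
  let K : Submodule ℂ (WithLp 2 (H × H)) :=
    A.graph.comap (WithLp.linearEquiv 2 ℂ (H × H)).toLinearMap
  have hK : IsClosed (K : Set (WithLp 2 (H × H))) :=
    IsClosed.preimage (WithLp.prod_continuous_ofLp 2 H H) hc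
  have : CompleteSpace K := hK.completeSpace_coe
  obtain ⟨p, hp, q, hq, hpq⟩ := K.exists_add_mem_mem_orthogonal (WithLp.toLp 2 (a, b))
  have hp' : WithLp.ofLp p ∈ A.graph := hp
  rw [LinearPMap.mem_graph_iff] at hp'
  obtain ⟨x, hx1, hx2⟩ := hp'
  have hw : ∀ x' : A.domain, ⟪-q.fst, (x' : H)⟫_ℂ = ⟪q.snd, A x'⟫_ℂ := by
    intro x'
    have hm : WithLp.toLp 2 ((x' : H), A x') ∈ K := by
      change ((x' : H), A x') ∈ A.graph
      exact A.mem_graph x'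
    have h0 := (Submodule.mem_orthogonal' K q).1 hq _ hm
    rw [WithLp.prod_inner_apply] at h0
    rw [inner_neg_left]
    exact neg_eq_of_add_eq_zero_right h0
  have hv : q.snd ∈ A.adjoint.domain := LinearPMap.mem_adjoint_domain_of_exists _ ⟨_, hw⟩
  have hval : A.adjoint ⟨q.snd, hv⟩ = -q.fst := LinearPMap.adjoint_apply_eq hd ⟨q.snd, hv⟩ hw
  refine ⟨x, ⟨q.snd, hv⟩, ?_, ?_⟩
  · rw [hval, hx1, sub_neg_eq_add]
    exact congrArg WithLp.fst hpq
  · rw [hx2]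
    exact congrArg WithLp.snd hpq

/-- Let `A` be a densely defined closed operator on a complex Hilbert
space `H` which is EP. Then the operator `A A*`, i.e. the operator `T` with domain
`{y ∈ D(A*) : A* y ∈ D(A)}` given by `y ↦ A (A* y)`, is a densely defined closed
operator which is EP; moreover `R(A A*) = R(A)` and `R(A A*)` is closed. -/
theorem stmt8 (A : H →ₗ.[ℂ] H) (hd : Dense (A.domain : Set H)) (hc : A.IsClosed)
    (hr : IsClosed (A.ran : Set H)) (hEP : A.ran = A.adjoint.ran)
    (T : H →ₗ.[ℂ] H)
    (hTdom : ∀ y : H, y ∈ T.domain ↔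
      ∃ hy : y ∈ A.adjoint.domain, A.adjoint ⟨y, hy⟩ ∈ A.domain)
    (hTval : ∀ (y : H) (hyT : y ∈ T.domain) (h1 : y ∈ A.adjoint.domain)
      (h2 : A.adjoint ⟨y, h1⟩ ∈ A.domain), T ⟨y, hyT⟩ = A ⟨A.adjoint ⟨y, h1⟩, h2⟩) :
    Dense (T.domain : Set H) ∧ T.IsClosed ∧ T.ran = T.adjoint.ran ∧
      T.ran = A.ran ∧ IsClosed (T.ran : Set H) := by
  have hfa : ∀ (v : A.adjoint.domain) (x : A.domain), ⟪A.adjoint v, (x : H)⟫_ℂ = ⟪(v : H), A x⟫_ℂ :=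
    fun v x => LinearPMap.adjoint_isFormalAdjoint hd v x
  have hTq : ∀ y z : T.domain, ∃ (hy : (y : H) ∈ A.adjoint.domain) (hz : (z : H) ∈ A.adjoint.domain),
      ⟪(y : H), T z⟫_ℂ = ⟪A.adjoint ⟨y, hy⟩, A.adjoint ⟨z, hz⟩⟫_ℂ := by
    intro y z
    obtain ⟨h1, h2⟩ := (hTdom y).1 y.2
    obtain ⟨k1, k2⟩ := (hTdom z).1 z.2
    refine ⟨h1, k1, ?_⟩
    have := hTval z z.2 k1 k2
    rw [show T z = _ from this]
    exact (hfa ⟨y, h1⟩ ⟨_, k2⟩).symm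
  have hsym : ∀ y z : T.domain, ⟪T y, (z : H)⟫_ℂ = ⟪(y : H), T z⟫_ℂ := by
    intro y z
    obtain ⟨h1, h2, h3⟩ := hTq y z
    obtain ⟨_, _, k3⟩ := hTq z y
    rw [h3, ← inner_conj_symm, k3, inner_conj_symm]
  have hsurj : ∀ h : H, ∃ y : T.domain, h = T y + (y : H) := by
    intro h
    obtain ⟨x, v, h1, h2⟩ := aux_decomp A hd hc 0 h
    have hx : (x : H) = A.adjoint v := sub_eq_zero.1 h1.symm
    have hm : A.adjoint ⟨(v : H), v.2⟩ ∈ A.domain := by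
      have := x.2
      rw [hx] at this
      exact this
    have hvT : (v : H) ∈ T.domain := (hTdom v).2 ⟨v.2, hm⟩
    refine ⟨⟨v, hvT⟩, ?_⟩
    rw [hTval v hvT v.2 hm, h2]
    congr 2
    exact Subtype.ext hx
  have hdense : Dense (T.domain : Set H) := by
    rw [Submodule.dense_iff_topologicalClosure_eq_top,
      Submodule.topologicalClosure_eq_top_iff, Submodule.eq_bot_iff]
    intro z hz
    obtain ⟨y, hy⟩ := hsurj z
    have h0 := (Submodule.mem_orthogonal _ z).1 hz y y.2
    obtain ⟨h1, _, h3⟩ := hTq y y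
    rw [hy, inner_add_right, h3, inner_self_eq_norm_sq_to_K, inner_self_eq_norm_sq_to_K] at h0
    have h4 : ‖A.adjoint ⟨y, h1⟩‖ ^ 2 + ‖(y : H)‖ ^ 2 = 0 := by
      exact (RCLike.ofReal_eq_zero (K := ℂ)).1 (by push_cast; exact h0)
    have hy0 : (y : H) = 0 := by
      have : ‖(y : H)‖ = 0 := by
        have h5 := sq_nonneg ‖A.adjoint ⟨y, h1⟩‖
        have h6 := sq_nonneg ‖(y : H)‖
        exact pow_eq_zero_iff two_ne_zero |>.1 (by linarith)
      exact norm_eq_zero.1 this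
    have hy1 : y = 0 := Subtype.ext hy0
    rw [hy, hy1]
    simp
  have hle : T ≤ T.adjoint :=
    LinearPMap.IsFormalAdjoint.le_adjoint hdense (fun y z => hsym y z)
  have hsa : T.adjoint = T := by
    refine (LinearPMap.eq_of_le_of_domain_eq hle (le_antisymm hle.1 ?_)).symm
    intro y hy
    obtain ⟨w, hw⟩ := hsurj (T.adjoint ⟨y, hy⟩ + y)
    have key : ∀ x : T.domain, ⟪y - w, T x + (x : H)⟫_ℂ = 0 := by
      intro x
      have e1 : ⟪T.adjoint ⟨y, hy⟩, (x : H)⟫_ℂ = ⟪y, T x⟫_ℂ :=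
        LinearPMap.adjoint_isFormalAdjoint hdense ⟨y, hy⟩ x
      have e2 := congrArg (fun t => ⟪t, (x : H)⟫_ℂ) hw
      simp only [inner_add_left, e1, hsym w x] at e2
      rw [inner_sub_left, inner_add_right, inner_add_right, e2, sub_self]
    obtain ⟨x, hx⟩ := hsurj (y - w)
    have := key x
    rw [← hx, inner_self_eq_zero, sub_eq_zero] at this
    rw [this]
    exact w.2
  have hran : T.ran = A.ran := by
    apply le_antisymm
    · rintro _ ⟨y, rfl⟩
      obtain ⟨h1, h2⟩ := (hTdom y).1 y.2
      exact ⟨⟨_, h2⟩, (hTval y y.2 h1 h2).symm⟩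
    · rintro _ ⟨x, rfl⟩
      have : CompleteSpace A.adjoint.ran := by
        rw [← hEP]
        exact hr.completeSpace_coe
      obtain ⟨r, hrr, n, hn, hx⟩ := A.adjoint.ran.exists_add_mem_mem_orthogonal (x : H)
      obtain ⟨x', v, h1, h2⟩ := aux_decomp A hd hc n 0
      have hv : (v : H) = - A x' := by
        rw [eq_neg_iff_add_eq_zero, add_comm]; exact h2.symm
      have h0 : ⟪A.adjoint v, n⟫_ℂ = 0 := (Submodule.mem_orthogonal _ n).1 hn _ ⟨v, rfl⟩
      have hAx : A x' = -(v : H) := by rw [hv, neg_neg]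
      rw [h1, inner_sub_right, hfa v x', hAx, inner_neg_right,
        inner_self_eq_norm_sq_to_K, inner_self_eq_norm_sq_to_K] at h0
      have h4 : - ‖(v : H)‖ ^ 2 - ‖A.adjoint v‖ ^ 2 = 0 := by exact (RCLike.ofReal_eq_zero (K := ℂ)).1 (by push_cast; exact h0)
      have h5 := sq_nonneg ‖A.adjoint v‖
      have h6 := sq_nonneg ‖(v : H)‖
      have hv0 : (v : H) = 0 :=
        norm_eq_zero.1 (pow_eq_zero_iff two_ne_zero |>.1 (by linarith))
      have hv1 : A.adjoint v = 0 :=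
        norm_eq_zero.1 (pow_eq_zero_iff two_ne_zero |>.1 (by linarith))
      obtain ⟨y, hy⟩ := hrr
      have hy' : A.adjoint y = r := hy
      have hrx : A.adjoint ⟨(y : H), y.2⟩ = ((x - x' : A.domain) : H) := by
        change A.adjoint y = (x : H) - x'
        rw [hy', hx, h1, hv1]
        abel
      have hm : A.adjoint ⟨(y : H), y.2⟩ ∈ A.domain := by
        rw [hrx]
        exact (x - x').2
      have hyT : (y : H) ∈ T.domain := (hTdom y).2 ⟨y.2, hm⟩
      refine ⟨⟨y, hyT⟩, ?_⟩
      change T ⟨y, hyT⟩ = A x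
      rw [hTval y hyT y.2 hm]
      have : (⟨A.adjoint ⟨(y : H), y.2⟩, hm⟩ : A.domain) = x - x' := Subtype.ext hrx
      rw [this, LinearPMap.map_sub, hAx, hv0]
      simp
  refine ⟨hdense, ?_, by rw [hsa], hran, by rw [hran]; exact hr⟩
  have := LinearPMap.adjoint_isClosed hdense
  rwa [hsa] at this
end
end

section
/- Let A be a densely defined closed operator on a complex Hilbert space H which is EP. Then the operator A*A, defined by x ↦ A*(Ax) on the domain {x ∈ D(A) : Ax ∈ D(A*)}, is a densely defined closed operator which is EP; moreover R(A*A) = R(A*) and R(A*A) is closed. -/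
open scoped InnerProductSpace
open LinearPMap

noncomputable section

variable {H : Type*} [NormedAddCommGroup H] [InnerProductSpace ℂ H] [CompleteSpace H]

theorem adj_of_inner (A : H →ₗ.[ℂ] H) (hd : Dense (A.domain : Set H)) (v u : H)
    (h : ∀ a : A.domain, inner ℂ u (a : H) = inner ℂ v (A a)) :
    ∃ hv : v ∈ A.adjoint.domain, A.adjoint ⟨v, hv⟩ = u :=
  ⟨mem_adjoint_domain_of_exists v ⟨u, h⟩, adjoint_apply_eq hd _ h⟩

theorem exists_add_adj (A : H →ₗ.[ℂ] H) (hd : Dense (A.domain : Set H)) (hc : A.IsClosed)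
    (z : H) : ∃ (x : H) (hx : x ∈ A.domain) (hy : A ⟨x, hx⟩ ∈ A.adjoint.domain),
      x + A.adjoint ⟨A ⟨x, hx⟩, hy⟩ = z := by
  let G : Submodule ℂ (WithLp 2 (H × H)) :=
    A.graph.comap (WithLp.linearEquiv 2 ℂ (H × H)).toLinearMap
  have hG : IsClosed (G : Set (WithLp 2 (H × H))) :=
    IsClosed.preimage (WithLp.prod_continuous_ofLp 2 H H) hc
  haveI : CompleteSpace G := hG.completeSpace_coe
  obtain ⟨g, hg, k, hk, hgk⟩ := G.exists_add_mem_mem_orthogonal (WithLp.toLp 2 (z, (0 : H)))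
  have hg' : (g.fst, g.snd) ∈ A.graph := hg
  rw [mem_graph_iff] at hg'
  obtain ⟨⟨x, hx⟩, hx1, hx2⟩ := hg'
  simp only at hx1 hx2
  have e1 : z = g.fst + k.fst := congrArg (fun p => p.fst) hgk
  have e2 : 0 = g.snd + k.snd := congrArg (fun p => p.snd) hgk
  obtain ⟨hv, hvu⟩ := adj_of_inner A hd g.snd k.fst (by
    intro a
    have hm : WithLp.toLp 2 ((a : H), A a) ∈ G := A.mem_graph a
    have h := (Submodule.mem_orthogonal' G k).1 hk _ hm
    simp only [WithLp.prod_inner_apply] at h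
    have e3 : g.snd = -k.snd := eq_neg_of_add_eq_zero_left e2.symm
    rw [e3, inner_neg_left]
    exact eq_neg_of_add_eq_zero_left h)
  refine ⟨x, hx, by rw [hx2]; exact hv, ?_⟩
  rw [e1, ← hx1, ← hvu]
  congr 2
  exact Subtype.ext hx2

/-- Let `A` be a densely defined closed operator on a complex Hilbert
space `H` which is EP. Then the operator `A* A`, i.e. the operator `T` with domain
`{x ∈ D(A) : A x ∈ D(A*)}` given by `x ↦ A* (A x)`, is a densely defined closed
operator which is EP; moreover `R(A* A) = R(A*)` and `R(A* A)` is closed. -/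
theorem stmt9 (A : H →ₗ.[ℂ] H) (hd : Dense (A.domain : Set H)) (hc : A.IsClosed)
    (hr : IsClosed (A.ran : Set H)) (hEP : A.ran = A.adjoint.ran)
    (T : H →ₗ.[ℂ] H)
    (hTdom : ∀ x : H, x ∈ T.domain ↔
      ∃ hx : x ∈ A.domain, A ⟨x, hx⟩ ∈ A.adjoint.domain)
    (hTval : ∀ (x : H) (hxT : x ∈ T.domain) (h1 : x ∈ A.domain)
      (h2 : A ⟨x, h1⟩ ∈ A.adjoint.domain), T ⟨x, hxT⟩ = A.adjoint ⟨A ⟨x, h1⟩, h2⟩) :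
    Dense (T.domain : Set H) ∧ T.IsClosed ∧ T.ran = T.adjoint.ran ∧
      T.ran = A.adjoint.ran ∧ IsClosed (T.ran : Set H) := by
  have hfa := adjoint_isFormalAdjoint hd
  have hT : ∀ x : T.domain, ∃ (h1 : (x : H) ∈ A.domain)
      (h2 : A ⟨x, h1⟩ ∈ A.adjoint.domain), T x = A.adjoint ⟨A ⟨x, h1⟩, h2⟩ := by
    rintro ⟨x, hx⟩
    obtain ⟨h1, h2⟩ := (hTdom x).1 hx
    exact ⟨h1, h2, hTval x hx h1 h2⟩
  have hsurj : ∀ z : H, ∃ x : T.domain, (x : H) + T x = z := by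
    intro z
    obtain ⟨x, h1, h2, h⟩ := exists_add_adj A hd hc z
    exact ⟨⟨x, (hTdom x).2 ⟨h1, h2⟩⟩, by rw [hTval x _ h1 h2]; exact h⟩
  have hsymm : T.IsFormalAdjoint T := by
    intro x y
    obtain ⟨h1, h2, h⟩ := hT x
    obtain ⟨k1, k2, k⟩ := hT y
    rw [h, k]
    have a1 := hfa ⟨_, h2⟩ ⟨y, k1⟩
    have a2 := hfa.symm ⟨x, h1⟩ ⟨_, k2⟩
    exact a1.trans a2
  have hdense : Dense (T.domain : Set H) := by
    rw [Submodule.dense_iff_topologicalClosure_eq_top,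
      Submodule.topologicalClosure_eq_top_iff, Submodule.eq_bot_iff]
    intro z hz
    obtain ⟨x, rfl⟩ := hsurj z
    have h0 := (Submodule.mem_orthogonal' _ _).1 hz x x.2
    obtain ⟨h1, h2, h⟩ := hT x
    have a1 := hfa ⟨_, h2⟩ ⟨x, h1⟩
    rw [inner_add_left, h, a1] at h0
    have h3 := congrArg Complex.re h0
    have p1 : 0 ≤ (inner ℂ (A ⟨x, h1⟩) (A ⟨x, h1⟩)).re := inner_self_nonneg (𝕜 := ℂ)
    have p2 : 0 ≤ (inner ℂ (x : H) (x : H)).re := inner_self_nonneg (𝕜 := ℂ)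
    simp only [Complex.add_re, Complex.zero_re] at h3
    have p3 : (inner ℂ (x : H) (x : H)).re ≤ 0 := by linarith
    have hx0 : (x : H) = 0 := by
      have p4 : ‖(x : H)‖ ^ 2 ≤ 0 := (inner_self_eq_norm_sq (𝕜 := ℂ) (x : H)) ▸ p3
      exact norm_eq_zero.1 (pow_eq_zero_iff two_ne_zero |>.1 (le_antisymm p4 (sq_nonneg _)))
    have hx0' : x = 0 := Subtype.ext hx0
    rw [hx0']
    simp
  have hle : T ≤ T.adjoint := hsymm.le_adjoint hdense
  have hTfa := adjoint_isFormalAdjoint hdense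
  have hsa : T.adjoint = T := by
    refine (eq_of_le_of_domain_eq hle (le_antisymm hle.1 ?_)).symm
    intro y hy
    obtain ⟨x, hx⟩ := hsurj (y + T.adjoint ⟨y, hy⟩)
    have : y = x := by
      refine ext_inner_right ℂ fun z => ?_
      obtain ⟨w, rfl⟩ := hsurj z
      rw [inner_add_right, inner_add_right, ← hsymm x w]
      have b := hTfa ⟨y, hy⟩ w
      simp only at b
      rw [← b, ← inner_add_left, ← inner_add_left, hx]
    rw [this]
    exact x.2
  have hran : T.ran = A.adjoint.ran := by
    apply le_antisymm
    · rintro _ ⟨x, rfl⟩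
      obtain ⟨h1, h2, h⟩ := hT x
      exact ⟨⟨_, h2⟩, h.symm⟩
    · rintro _ ⟨⟨v, hv⟩, rfl⟩
      haveI : CompleteSpace A.ran := hr.completeSpace_coe
      obtain ⟨p, hp, q, hq, hpq⟩ := A.ran.exists_add_mem_mem_orthogonal v
      obtain ⟨⟨x, hx⟩, hxp⟩ := hp
      have hxp' : A ⟨x, hx⟩ = p := hxp
      obtain ⟨h2, h3⟩ := adj_of_inner A hd (A ⟨x, hx⟩) (A.adjoint ⟨v, hv⟩) (by
        intro a
        rw [hfa ⟨v, hv⟩ a, hxp']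
        have := (Submodule.mem_orthogonal' _ _).1 hq (A a) ⟨a, rfl⟩
        simp only
        rw [hpq, inner_add_left, this, add_zero])
      exact ⟨⟨x, (hTdom x).2 ⟨hx, h2⟩⟩, (hTval x _ hx h2).trans h3⟩
  refine ⟨hdense, ?_, by rw [hsa], hran, by rw [hran, ← hEP]; exact hr⟩
  exact IsSelfAdjoint.isClosed (isSelfAdjoint_def.2 hsa)
end
end

section
/- Let A be a densely defined closed operator on a complex Hilbert space H which is EP. Then there exists a bijective linear map C from D(A*) onto D(A) such that A*y = A(Cy) for every y ∈ D(A*). -/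
open scoped InnerProductSpace
open LinearPMap

noncomputable section

variable {H : Type*} [NormedAddCommGroup H] [InnerProductSpace ℂ H] [CompleteSpace H]

theorem exists_bij_of_range_eq {D E V : Type*} [AddCommGroup D] [Module ℂ D] [AddCommGroup E]
    [Module ℂ E] [AddCommGroup V] [Module ℂ V] (f : D →ₗ[ℂ] V) (g : E →ₗ[ℂ] V)
    (hfg : LinearMap.range f = LinearMap.range g) (e : LinearMap.ker f ≃ₗ[ℂ] LinearMap.ker g) :
    ∃ C : D →ₗ[ℂ] E, Function.Bijective C ∧ ∀ y, f y = g (C y) := by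
  obtain ⟨s, hs⟩ := f.rangeRestrict.exists_rightInverse_of_surjective f.range_rangeRestrict
  obtain ⟨t, ht⟩ := g.rangeRestrict.exists_rightInverse_of_surjective g.range_rangeRestrict
  have hs' : ∀ v, f (s v) = v := fun v => congrArg Subtype.val (LinearMap.congr_fun hs v)
  have ht' : ∀ v, g (t v) = v := fun v => congrArg Subtype.val (LinearMap.congr_fun ht v)
  let p : D →ₗ[ℂ] LinearMap.ker f :=
    (LinearMap.id - s ∘ₗ f.rangeRestrict).codRestrict _ (fun y => by simp [hs'])
  let q : D →ₗ[ℂ] LinearMap.range g :=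
    f.codRestrict _ (fun y => hfg ▸ LinearMap.mem_range_self f y)
  let C : D →ₗ[ℂ] E := (LinearMap.ker g).subtype ∘ₗ e.toLinearMap ∘ₗ p + t ∘ₗ q
  have hC : ∀ y, C y = (e (p y) : E) + t (q y) := fun y => rfl
  have hp : ∀ y, (p y : D) = y - s (f.rangeRestrict y) := fun y => rfl
  have hq : ∀ y, (q y : V) = f y := fun y => rfl
  have hgC : ∀ y, f y = g (C y) := by
    intro y
    rw [hC, _root_.map_add, ht', hq, LinearMap.mem_ker.1 (e (p y)).2, zero_add]
  refine ⟨C, ⟨?_, ?_⟩, hgC⟩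
  · rw [← LinearMap.ker_eq_bot, LinearMap.ker_eq_bot']
    intro y hy
    have h0 : f y = 0 := by rw [hgC, hy, _root_.map_zero]
    have hq0 : q y = 0 := Subtype.ext (by rw [hq, h0]; rfl)
    have hr0 : f.rangeRestrict y = 0 := Subtype.ext h0
    rw [hC, hq0, _root_.map_zero, add_zero] at hy
    have h1 : p y = 0 := e.map_eq_zero_iff.1 (Subtype.ext hy)
    have := hp y
    rw [h1, hr0, _root_.map_zero, sub_zero] at this
    exact this.symm
  · intro x
    let k : LinearMap.ker g := ⟨x - t (g.rangeRestrict x), by simp [ht']⟩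
    let r : LinearMap.range f := ⟨g x, hfg ▸ LinearMap.mem_range_self g x⟩
    have hk : (k : E) = x - t (g.rangeRestrict x) := rfl
    refine ⟨(e.symm k : D) + s r, ?_⟩
    have hf : f ((e.symm k : D) + s r) = g x := by
      rw [_root_.map_add, hs', LinearMap.mem_ker.1 (e.symm k).2, zero_add]
    have h1 : f.rangeRestrict ((e.symm k : D) + s r) = r := Subtype.ext hf
    have h2 : q ((e.symm k : D) + s r) = g.rangeRestrict x := Subtype.ext hf
    have h3 : p ((e.symm k : D) + s r) = e.symm k :=
      Subtype.ext (by rw [hp, h1, add_sub_cancel_right])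
    rw [hC, h2, h3, e.apply_symm_apply, hk, sub_add_cancel]

theorem adjoint_ker_iff (A : H →ₗ.[ℂ] H) (hd : Dense (A.domain : Set H)) (y : H) :
    (∃ h : y ∈ A.adjoint.domain, A.adjoint ⟨y, h⟩ = 0) ↔ y ∈ A.ranᗮ := by
  rw [Submodule.mem_orthogonal']
  constructor
  · rintro ⟨h, h0⟩ u ⟨x, rfl⟩
    have := A.adjoint_isFormalAdjoint hd ⟨y, h⟩ x
    rw [h0, inner_zero_left] at this
    exact this.symm
  · intro h
    have h' : ∀ x : A.domain, ⟪(0 : H), x⟫_ℂ = ⟪y, A x⟫_ℂ := fun x => by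
      rw [inner_zero_left]; exact (h _ ⟨x, rfl⟩).symm
    exact ⟨A.mem_adjoint_domain_of_exists y ⟨0, h'⟩, adjoint_apply_eq hd _ h'⟩

theorem ker_iff (A : H →ₗ.[ℂ] H) (hd : Dense (A.domain : Set H)) (hc : A.IsClosed) (y : H) :
    (∃ h : y ∈ A.domain, A ⟨y, h⟩ = 0) ↔ y ∈ A.adjoint.ranᗮ := by
  constructor
  · rintro ⟨h, h0⟩
    rw [Submodule.mem_orthogonal]
    rintro u ⟨x, rfl⟩
    have := A.adjoint_isFormalAdjoint hd x ⟨y, h⟩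
    rw [h0, inner_zero_right] at this
    exact this
  · intro h
    rw [Submodule.mem_orthogonal] at h
    let G : Submodule ℂ (WithLp 2 (H × H)) :=
      A.graph.comap (WithLp.linearEquiv 2 ℂ (H × H)).toLinearMap
    have hG : IsClosed (G : Set (WithLp 2 (H × H))) :=
      IsClosed.preimage (WithLp.prod_continuous_ofLp 2 H H) hc
    have : CompleteSpace G := hG.completeSpace_coe
    have hmem : WithLp.toLp 2 (y, (0 : H)) ∈ Gᗮᗮ := by
      rw [Submodule.mem_orthogonal]
      intro w hw
      rw [Submodule.mem_orthogonal'] at hw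
      have h' : ∀ x : A.domain, ⟪-w.fst, x⟫_ℂ = ⟪w.snd, A x⟫_ℂ := fun x => by
        have := hw (WithLp.toLp 2 ((x : H), A x)) (A.mem_graph x)
        simp only [WithLp.prod_inner_apply] at this
        rw [inner_neg_left]
        exact neg_eq_of_add_eq_zero_right this
      have hD := A.mem_adjoint_domain_of_exists w.snd ⟨_, h'⟩
      have hv := adjoint_apply_eq hd ⟨_, hD⟩ h'
      have h3 := h (-w.fst) ⟨⟨_, hD⟩, hv⟩
      rw [inner_neg_left, neg_eq_zero] at h3
      simp only [WithLp.prod_inner_apply, inner_zero_right, add_zero]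
      exact h3
    rw [Submodule.orthogonal_orthogonal] at hmem
    have hm : (y, (0 : H)) ∈ A.graph := hmem
    rw [LinearPMap.mem_graph_iff] at hm
    obtain ⟨x, hx, hx0⟩ := hm
    dsimp at hx hx0
    subst hx
    exact ⟨x.2, hx0⟩

/-- Let `A` be a densely defined closed operator on a complex Hilbert
space `H` which is EP. Then there exists a bijective linear map `C` from `D(A*)` onto
`D(A)` such that `A* y = A (C y)` for every `y ∈ D(A*)`. -/
theorem stmt11 (A : H →ₗ.[ℂ] H) (hd : Dense (A.domain : Set H)) (hc : A.IsClosed)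
    (hr : IsClosed (A.ran : Set H)) (hEP : A.ran = A.adjoint.ran) :
    ∃ C : A.adjoint.domain →ₗ[ℂ] A.domain, Function.Bijective C ∧
      ∀ y : A.adjoint.domain, A.adjoint y = A (C y) := by
  have key : ∀ y : H, (∃ h : y ∈ A.adjoint.domain, A.adjoint ⟨y, h⟩ = 0) ↔
      (∃ h : y ∈ A.domain, A ⟨y, h⟩ = 0) := fun y => by
    rw [adjoint_ker_iff A hd, ker_iff A hd hc, hEP]
  let e : LinearMap.ker A.adjoint.toFun ≃ₗ[ℂ] LinearMap.ker A.toFun :=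
    { toFun := fun y => ⟨⟨y.1.1, ((key y.1.1).1 ⟨y.1.2, y.2⟩).1⟩,
        ((key y.1.1).1 ⟨y.1.2, y.2⟩).2⟩
      invFun := fun y => ⟨⟨y.1.1, ((key y.1.1).2 ⟨y.1.2, y.2⟩).1⟩,
        ((key y.1.1).2 ⟨y.1.2, y.2⟩).2⟩
      map_add' := fun _ _ => rfl
      map_smul' := fun _ _ => rfl
      left_inv := fun _ => rfl
      right_inv := fun _ => rfl }
  exact exists_bij_of_range_eq A.adjoint.toFun A.toFun hEP.symm e
end
end

section
/- Let A be a densely defined closed operator on a complex Hilbert space H with closed range. Then R(A) ⊆ R(A*) if and only if N(A) ⊆ N(A*). -/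
open scoped InnerProductSpace
open LinearPMap

noncomputable section

variable {H : Type*} [NormedAddCommGroup H] [InnerProductSpace ℂ H] [CompleteSpace H]

theorem mem_nul_iff_aux (A : H →ₗ.[ℂ] H) (x : H) :
    x ∈ A.nul ↔ ∃ h : x ∈ A.domain, A ⟨x, h⟩ = 0 := by
  unfold LinearPMap.nul
  simp only [Submodule.mem_map, LinearMap.mem_ker, Submodule.subtype_apply, Subtype.exists]
  constructor
  · rintro ⟨a, ha, h0, rfl⟩
    exact ⟨ha, h0⟩
  · rintro ⟨ha, h0⟩
    exact ⟨x, ha, h0, rfl⟩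

theorem mem_ran_iff_aux (A : H →ₗ.[ℂ] H) (y : H) :
    y ∈ A.ran ↔ ∃ x : A.domain, A x = y := Iff.rfl

/-- The hard half of the closed range theorem. -/
theorem mem_adjoint_ran_aux (A : H →ₗ.[ℂ] H) (hd : Dense (A.domain : Set H)) (hc : A.IsClosed)
    (hr : IsClosed (A.ran : Set H)) (w : H) (hw : ∀ x ∈ A.nul, ⟪w, x⟫_ℂ = 0) :
    w ∈ A.adjoint.ran := by
  have hw' : ∀ x x' : A.domain, A x = A x' → ⟪w, (x : H)⟫_ℂ = ⟪w, (x' : H)⟫_ℂ := by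
    intro x x' h
    have h1 : ((x - x' : A.domain) : H) ∈ A.nul :=
      (mem_nul_iff_aux A _).2 ⟨(x - x').2, by
        change A (x - x') = 0
        rw [LinearPMap.map_sub, h, sub_self]⟩
    have h2 := hw _ h1
    rw [Submodule.coe_sub, inner_sub_right, sub_eq_zero] at h2
    exact h2
  haveI : CompleteSpace A.graph := by
    have : IsClosed (A.graph : Set (H × H)) := hc
    exact this.completeSpace_coe
  haveI : CompleteSpace A.ran := hr.completeSpace_coe
  let f : A.graph →L[ℂ] A.ran :=
    ((ContinuousLinearMap.snd ℂ H H).comp A.graph.subtypeL).codRestrict A.ran (by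
      rintro ⟨p, hp⟩
      obtain ⟨x, hx⟩ := (LinearPMap.mem_graph_iff A).1 hp
      exact ⟨x, hx.2⟩)
  have hf : Function.Surjective f := by
    rintro ⟨y, x, rfl⟩
    exact ⟨⟨((x : H), A x), A.mem_graph x⟩, rfl⟩
  obtain ⟨C, hC, hb⟩ := f.exists_preimage_norm_le hf
  have key : ∀ y : A.ran, ∃ x : A.domain, A x = (y : H) ∧ ‖(x : H)‖ ≤ C * ‖y‖ := by
    intro y
    obtain ⟨⟨p, hp⟩, h1, h2⟩ := hb y
    obtain ⟨x, hx1, hx2⟩ := (LinearPMap.mem_graph_iff A).1 hp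
    refine ⟨x, ?_, ?_⟩
    · rw [hx2, ← h1]; rfl
    · rw [hx1]; exact (norm_fst_le p).trans h2
  choose g hg hgn using key
  let φ : A.ran →ₗ[ℂ] ℂ :=
    { toFun := fun y => ⟪w, (g y : H)⟫_ℂ
      map_add' := by
        intro y y'
        rw [← inner_add_right, ← Submodule.coe_add]
        apply hw'
        rw [LinearPMap.map_add, hg, hg, hg, Submodule.coe_add]
      map_smul' := by
        intro c y
        rw [RingHom.id_apply, smul_eq_mul, ← inner_smul_right, ← Submodule.coe_smul]
        apply hw'
        rw [LinearPMap.map_smul, hg, hg, Submodule.coe_smul] }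
  let Φ : StrongDual ℂ A.ran := φ.mkContinuous (‖w‖ * C) (by
    intro y
    calc ‖⟪w, (g y : H)⟫_ℂ‖ ≤ ‖w‖ * ‖(g y : H)‖ := norm_inner_le_norm _ _
      _ ≤ ‖w‖ * (C * ‖y‖) := by gcongr; exact hgn y
      _ = ‖w‖ * C * ‖y‖ := by ring)
  let z : A.ran := (InnerProductSpace.toDual ℂ A.ran).symm Φ
  have hz : ∀ x : A.domain, ⟪w, (x : H)⟫_ℂ = ⟪(z : H), A x⟫_ℂ := by
    intro x
    have h1 : ⟪z, (⟨A x, x, rfl⟩ : A.ran)⟫_ℂ = Φ ⟨A x, x, rfl⟩ :=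
      InnerProductSpace.toDual_symm_apply
    rw [Submodule.coe_inner] at h1
    refine Eq.trans ?_ h1.symm
    exact hw' _ _ (hg ⟨A x, x, rfl⟩).symm
  have hzd := LinearPMap.mem_adjoint_domain_of_exists (T := A) (z : H) ⟨w, hz⟩
  exact ⟨⟨z, hzd⟩, LinearPMap.adjoint_apply_eq hd ⟨z, hzd⟩ hz⟩

/-- Let `A` be a densely defined closed operator on a complex Hilbert
space `H` with closed range. Then `R(A) ⊆ R(A*)` if and only if `N(A) ⊆ N(A*)`. -/
theorem stmt12 (A : H →ₗ.[ℂ] H) (hd : Dense (A.domain : Set H)) (hc : A.IsClosed)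
    (hr : IsClosed (A.ran : Set H)) :
    A.ran ≤ A.adjoint.ran ↔ A.nul ≤ A.adjoint.nul := by
  constructor
  · intro h x hx
    obtain ⟨hxd, hx0⟩ := (mem_nul_iff_aux A x).1 hx
    have hz : ∀ u : A.domain, ⟪(0 : H), (u : H)⟫_ℂ = ⟪x, A u⟫_ℂ := by
      intro u
      obtain ⟨v, hv⟩ := (mem_ran_iff_aux _ _).1 (h ((mem_ran_iff_aux A _).2 ⟨u, rfl⟩))
      have h1 := LinearPMap.adjoint_isFormalAdjoint hd v ⟨x, hxd⟩
      rw [hv, hx0, inner_zero_right] at h1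
      rw [inner_zero_left, ← inner_conj_symm, h1, _root_.map_zero]
    have hzd := LinearPMap.mem_adjoint_domain_of_exists (T := A) x ⟨0, hz⟩
    exact (mem_nul_iff_aux _ _).2 ⟨hzd, LinearPMap.adjoint_apply_eq hd ⟨x, hzd⟩ hz⟩
  · rintro h _ ⟨u, rfl⟩
    apply mem_adjoint_ran_aux A hd hc hr
    intro x hx
    obtain ⟨hxd, hx0⟩ := (mem_nul_iff_aux _ x).1 (h hx)
    have h1 := LinearPMap.adjoint_isFormalAdjoint hd ⟨x, hxd⟩ u
    rw [hx0, inner_zero_left] at h1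
    rw [← inner_conj_symm]
    exact (congrArg _ h1.symm).trans (_root_.map_zero _)
end
end

section
/- Let A be a densely defined closed operator on a complex Hilbert space H with closed range such that R(A) ⊆ D(A), and let B be the Moore–Penrose inverse of A. Then A is hypo-EP (i.e., R(A) ⊆ R(A*)) if and only if B(A(A(By))) = A(By) for every y ∈ H. -/
open scoped InnerProductSpace
open LinearPMap

noncomputable section

variable {H : Type*} [NormedAddCommGroup H] [InnerProductSpace ℂ H] [CompleteSpace H]

/-- Let `A` be a densely defined closed operator on a complex Hilbert
space `H` with closed range such that `R(A) ⊆ D(A)`, and let `B` be the Moore–Penrose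
inverse of `A`. Then `A` is hypo-EP (`R(A) ⊆ R(A*)`) if and only if
`B (A (A (B y))) = A (B y)` for every `y ∈ H`. -/
theorem stmt13 (A : H →ₗ.[ℂ] H) (hd : Dense (A.domain : Set H)) (hc : A.IsClosed)
    (hr : IsClosed (A.ran : Set H)) (hRD : A.ran ≤ A.domain)
    (B : H →L[ℂ] H) (hB : IsMPInv A B) :
    A.ran ≤ A.adjoint.ran ↔
      ∀ y : H, B (A ⟨A ⟨B y, hB.1 y⟩,
        hRD (LinearMap.mem_range_self A.toFun ⟨B y, hB.1 y⟩)⟩) = A ⟨B y, hB.1 y⟩ := by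
  have inter : ∀ (K : Submodule ℂ H) (z : H), z ∈ K → z ∈ Kᗮ → z = 0 := by
    intro K z h1 h2
    exact inner_self_eq_zero.mp ((Submodule.mem_orthogonal K z).mp h2 z h1)
  obtain ⟨h1, h2, h3, h4⟩ := hB
  constructor
  · intro h y
    set z : A.domain := ⟨A ⟨B y, h1 y⟩,
        hRD (LinearMap.mem_range_self A.toFun ⟨B y, h1 y⟩)⟩ with hz
    have hzN : (z : H) ∈ A.nulᗮ := by
      obtain ⟨w, hw⟩ := h (LinearMap.mem_range_self A.toFun ⟨B y, h1 y⟩)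
      have hw' : A.adjoint w = (z : H) := hw
      rw [Submodule.mem_orthogonal']
      rintro _ ⟨n, hn, rfl⟩
      have hn' : A n = 0 := hn
      have := adjoint_isFormalAdjoint hd w n
      rw [hw', hn', inner_zero_right] at this
      exact this
    have := inter _ _ (Submodule.sub_mem _ hzN (h2 (A z))) (h4 z)
    exact (sub_eq_zero.mp this).symm
  · intro h y hy
    have hAB : A ⟨B y, h1 y⟩ = y := by
      have := inter _ _ (Submodule.sub_mem _ hy
        (LinearMap.mem_range_self A.toFun ⟨B y, h1 y⟩)) (h3 y (h1 y))
      exact (sub_eq_zero.mp this).symm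
    have hyN : y ∈ A.nulᗮ := by
      have h5 := h y
      have h6 := h2 (A ⟨A ⟨B y, h1 y⟩,
        hRD (LinearMap.mem_range_self A.toFun ⟨B y, h1 y⟩)⟩)
      rw [h5, hAB] at h6
      exact h6
    have key : ∀ x : A.domain,
        inner ℂ y (x : H) = inner ℂ (ContinuousLinearMap.adjoint B y) (A x) := by
      intro x
      rw [ContinuousLinearMap.adjoint_inner_left, ← sub_eq_zero, ← inner_sub_right]
      exact (Submodule.mem_orthogonal _ _).mp (h4 x) y hyN
    exact ⟨⟨_, mem_adjoint_domain_of_exists _ ⟨y, key⟩⟩, adjoint_apply_eq hd _ key⟩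
end
end

section
/- Let A be a densely defined closed operator on a complex Hilbert space H with closed range and let B be the Moore–Penrose inverse of A. If A is hypo-EP (i.e., R(A) ⊆ R(A*)), then A(B(B(Ax))) = A(Bx) for every x ∈ D(A). -/
open scoped InnerProductSpace
open LinearPMap

noncomputable section

variable {H : Type*} [NormedAddCommGroup H] [InnerProductSpace ℂ H] [CompleteSpace H]

/-- Let `A` be a densely defined closed operator on a complex Hilbert
space `H` with closed range and let `B` be the Moore–Penrose inverse of `A`. If `A` is
hypo-EP (`R(A) ⊆ R(A*)`), then `A (B (B (A x))) = A (B x)` for every `x ∈ D(A)`. -/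
theorem stmt14 (A : H →ₗ.[ℂ] H) (hd : Dense (A.domain : Set H)) (hc : A.IsClosed)
    (hr : IsClosed (A.ran : Set H)) (B : H →L[ℂ] H) (hB : IsMPInv A B)
    (hhypo : A.ran ≤ A.adjoint.ran) :
    ∀ x : A.domain, A ⟨B (B (A x)), hB.1 (B (A x))⟩ = A ⟨B (x : H), hB.1 (x : H)⟩ := by
  intro x
  have hle : A.ran ≤ A.nulᗮ := by
    intro y hy
    obtain ⟨z, rfl⟩ := hhypo hy
    rw [Submodule.mem_orthogonal]
    rintro _ ⟨w, hw, rfl⟩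
    have h := LinearPMap.adjoint_isFormalAdjoint hd z w
    have hw' : A w = 0 := hw
    rw [hw', inner_zero_right] at h
    rw [← inner_conj_symm]
    change (starRingEnd ℂ) (inner ℂ (A.adjoint z) (w : H)) = 0
    rw [h, _root_.map_zero]
  have h1 := hB.2.2.1 (B (A x)) (hB.1 _)
  have h2 := hB.2.2.1 (x : H) (hB.1 _)
  have h3 := Submodule.orthogonal_le hle (hB.2.2.2 x)
  have h4 : A ⟨B (B (A x)), hB.1 (B (A x))⟩ - A ⟨B (x : H), hB.1 (x : H)⟩ ∈ A.ranᗮ := by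
    have h5 := A.ranᗮ.sub_mem (A.ranᗮ.sub_mem h2 h1) h3
    convert h5 using 1
    abel
  have h6 : A ⟨B (B (A x)), hB.1 (B (A x))⟩ - A ⟨B (x : H), hB.1 (x : H)⟩ ∈ A.ran :=
    A.ran.sub_mem ⟨_, rfl⟩ ⟨_, rfl⟩
  have h7 := Submodule.inner_right_of_mem_orthogonal h6 h4
  exact sub_eq_zero.1 (inner_self_eq_zero.1 h7)
end
end

section
/- Let A be a densely defined closed operator on a complex Hilbert space H with closed range and let B be the Moore–Penrose inverse of A. If A(B(B(Ax))) = A(Bx) for every x ∈ D(A), then Re⟨A(Bx), x⟩ ≤ Re⟨B(Ax), x⟩ for every x ∈ D(A) (both inner products are in fact real). -/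
open scoped InnerProductSpace
open LinearPMap

noncomputable section

variable {H : Type*} [NormedAddCommGroup H] [InnerProductSpace ℂ H] [CompleteSpace H]

/-- Let `A` be a densely defined closed operator on a complex Hilbert
space `H` with closed range and let `B` be the Moore–Penrose inverse of `A`. If
`A (B (B (A x))) = A (B x)` for every `x ∈ D(A)`, then
`Re ⟪A (B x), x⟫ ≤ Re ⟪B (A x), x⟫` for every `x ∈ D(A)`. -/
theorem stmt15 (A : H →ₗ.[ℂ] H) (hd : Dense (A.domain : Set H)) (hc : A.IsClosed)
    (hr : IsClosed (A.ran : Set H)) (B : H →L[ℂ] H) (hB : IsMPInv A B)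
    (h : ∀ x : A.domain,
      A ⟨B (B (A x)), hB.1 (B (A x))⟩ = A ⟨B (x : H), hB.1 (x : H)⟩) :
    ∀ x : A.domain,
      (⟪A ⟨B (x : H), hB.1 (x : H)⟩, (x : H)⟫_ℂ).re ≤ (⟪B (A x), (x : H)⟫_ℂ).re := by
  intro x
  obtain ⟨h1, h2, h3, h4⟩ := hB
  have key : ∀ u v : H, ⟪u, v - u⟫_ℂ = 0 → (⟪u, v⟫_ℂ).re = ‖u‖ ^ 2 := by
    intro u v huv
    rw [inner_sub_right, sub_eq_zero] at huv
    rw [huv]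
    exact inner_self_eq_norm_sq (𝕜 := ℂ) u
  have hQ : ∀ y : H, (⟪A ⟨B y, h1 y⟩, y⟫_ℂ).re = ‖A ⟨B y, h1 y⟩‖ ^ 2 := by
    intro y
    apply key
    exact (Submodule.mem_orthogonal _ _).1 (h3 y (h1 y)) _ ⟨⟨B y, h1 y⟩, rfl⟩
  have hP : (⟪B (A x), (x : H)⟫_ℂ).re = ‖B (A x)‖ ^ 2 := by
    apply key
    exact (Submodule.mem_orthogonal _ _).1 (h4 x) _ (h2 _)
  have hle : ∀ y : H, ‖A ⟨B y, h1 y⟩‖ ≤ ‖y‖ := by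
    intro y
    have e1 := hQ y
    have e2 : (⟪A ⟨B y, h1 y⟩, y⟫_ℂ).re ≤ ‖A ⟨B y, h1 y⟩‖ * ‖y‖ :=
      re_inner_le_norm (𝕜 := ℂ) _ _
    by_contra! hlt
    have := norm_nonneg y
    nlinarith
  rw [hQ, hP, ← h x]
  exact pow_le_pow_left₀ (norm_nonneg _) (hle _) 2
end
end

section
/- Let A be a densely defined closed operator on a complex Hilbert space H with closed range such that R(A) ⊆ D(A), and let B be the Moore–Penrose inverse of A. If ‖A(Bx)‖ ≤ ‖B(Ax)‖ for every x ∈ D(A), then A is hypo-EP, i.e., R(A) ⊆ R(A*). -/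
open scoped InnerProductSpace
open LinearPMap

noncomputable section

variable {H : Type*} [NormedAddCommGroup H] [InnerProductSpace ℂ H] [CompleteSpace H]

/-- Let `A` be a densely defined closed operator on a complex Hilbert
space `H` with closed range such that `R(A) ⊆ D(A)`, and let `B` be the Moore–Penrose
inverse of `A`. If `‖A (B x)‖ ≤ ‖B (A x)‖` for every `x ∈ D(A)`, then `A` is hypo-EP,
i.e. `R(A) ⊆ R(A*)`. -/
theorem stmt17 (A : H →ₗ.[ℂ] H) (hd : Dense (A.domain : Set H)) (hc : A.IsClosed)
    (hr : IsClosed (A.ran : Set H)) (hRD : A.ran ≤ A.domain)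
    (B : H →L[ℂ] H) (hB : IsMPInv A B)
    (h : ∀ x : A.domain, ‖A ⟨B (x : H), hB.1 (x : H)⟩‖ ≤ ‖B (A x)‖) :
    A.ran ≤ A.adjoint.ran := by
  have hN : ∀ y ∈ A.ran, y ∈ A.nulᗮ := by
    intro y hy
    rw [Submodule.mem_orthogonal]
    rintro u ⟨x, hx, rfl⟩
    have hx0 : A x = 0 := hx
    have h1 := h x
    rw [hx0, _root_.map_zero, norm_zero] at h1
    have h2 : A ⟨B (x : H), hB.1 (x : H)⟩ = 0 := norm_le_zero_iff.mp h1
    have h3 := hB.2.2.1 (x : H) (hB.1 (x : H))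
    rw [h2, sub_zero] at h3
    exact Submodule.inner_left_of_mem_orthogonal hy h3
  intro y hy
  have key : ∀ x : A.domain,
      ⟪y, (x : H)⟫_ℂ = ⟪ContinuousLinearMap.adjoint B y, A x⟫_ℂ := by
    intro x
    rw [ContinuousLinearMap.adjoint_inner_left]
    have h4 : ⟪y, (x : H) - B (A x)⟫_ℂ = 0 :=
      Submodule.inner_right_of_mem_orthogonal (hN y hy) (hB.2.2.2 x)
    rwa [inner_sub_right, sub_eq_zero] at h4
  have hz : ContinuousLinearMap.adjoint B y ∈ A.adjoint.domain :=
    LinearPMap.mem_adjoint_domain_of_exists _ ⟨y, key⟩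
  exact ⟨⟨_, hz⟩, LinearPMap.adjoint_apply_eq hd ⟨_, hz⟩ key⟩
end
end

section
/- Let A be a densely defined closed operator on a complex Hilbert space H which is hypo-EP. Then for each x ∈ D(A) there exists a constant k > 0 such that |⟨Ax, y⟩| ≤ k ‖Ay‖ for all y ∈ D(A). -/
open scoped InnerProductSpace
open LinearPMap

noncomputable section

variable {H : Type*} [NormedAddCommGroup H] [InnerProductSpace ℂ H] [CompleteSpace H]

/-- Let `A` be a densely defined closed operator on a complex Hilbert
space `H` which is hypo-EP. Then for each `x ∈ D(A)` there exists a constant `k > 0`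
such that `|⟪A x, y⟫| ≤ k * ‖A y‖` for all `y ∈ D(A)`. -/
theorem stmt18 (A : H →ₗ.[ℂ] H) (hd : Dense (A.domain : Set H)) (hc : A.IsClosed)
    (hr : IsClosed (A.ran : Set H)) (hhypo : A.ran ≤ A.adjoint.ran) :
    ∀ x : A.domain, ∃ k : ℝ, 0 < k ∧
      ∀ y : A.domain, ‖⟪A x, (y : H)⟫_ℂ‖ ≤ k * ‖A y‖ := by
  intro x
  obtain ⟨z, hz⟩ := hhypo (show A x ∈ A.ran from ⟨x, rfl⟩)
  have hz' : A.adjoint z = A x := hz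
  refine ⟨‖(z : H)‖ + 1, by positivity, fun y => ?_⟩
  have h : ⟪A.adjoint z, (y : H)⟫_ℂ = ⟪(z : H), A y⟫_ℂ :=
    LinearPMap.adjoint_isFormalAdjoint hd z y
  rw [← hz', h]
  refine (norm_inner_le_norm _ _).trans ?_
  gcongr
  linarith
end
end

section
/- Let A be a densely defined closed operator on a complex Hilbert space H which is EP, let T be the Moore–Penrose inverse of A, and let B : H → H be a bounded linear operator such that ‖B‖·‖T‖ < 1, B(T(Ax)) = Bx for all x ∈ D(A), and A(T(By)) = By for all y ∈ H. Then the operator A + B, defined on D(A) by x ↦ Ax + Bx, is a densely defined closed operator which is EP: its range is closed and R(A + B) = R((A + B)*). -/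
open scoped InnerProductSpace
open LinearPMap

noncomputable section

variable {H : Type*} [NormedAddCommGroup H] [InnerProductSpace ℂ H] [CompleteSpace H]

/-- The perturbation `A + B` of a partially defined operator `A` by a bounded operator
`B`, defined on `D(A)` by `x ↦ A x + B x`. -/
def LinearPMap.addBounded (A : H →ₗ.[ℂ] H) (B : H →L[ℂ] H) : H →ₗ.[ℂ] H where
  domain := A.domain
  toFun := A.toFun + (B : H →ₗ[ℂ] H).comp A.domain.subtype

theorem mem_adjoint_ran_iff (A : H →ₗ.[ℂ] H) (hd : Dense (A.domain : Set H)) (w : H) :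
    w ∈ A.adjoint.ran ↔ ∃ y : H, ∀ x : A.domain, ⟪w, (x : H)⟫_ℂ = ⟪y, A x⟫_ℂ := by
  constructor
  · rintro ⟨y, rfl⟩
    exact ⟨(y : H), fun x => LinearPMap.adjoint_isFormalAdjoint hd y x⟩
  · rintro ⟨y, hy⟩
    have hm : y ∈ A.adjoint.domain := LinearPMap.mem_adjoint_domain_of_exists y ⟨w, hy⟩
    exact ⟨⟨y, hm⟩, LinearPMap.adjoint_apply_eq hd ⟨y, hm⟩ hy⟩

/-- Let `A` be a densely defined closed operator on a complex Hilbert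
space `H` which is EP, let `T` be the Moore–Penrose inverse of `A`, and let
`B : H →L[ℂ] H` be a bounded operator with `‖B‖ * ‖T‖ < 1`, `B (T (A x)) = B x` for all
`x ∈ D(A)` and `A (T (B y)) = B y` for all `y ∈ H`. Then the operator `A + B`, defined
on `D(A)` by `x ↦ A x + B x`, is a densely defined closed operator which is EP: its
range is closed and `R(A + B) = R((A + B)*)`. -/
theorem stmt19 (A : H →ₗ.[ℂ] H) (hd : Dense (A.domain : Set H)) (hc : A.IsClosed)
    (hr : IsClosed (A.ran : Set H)) (hEP : A.ran = A.adjoint.ran)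
    (T : H →L[ℂ] H) (hT : IsMPInv A T)
    (B : H →L[ℂ] H) (hnorm : ‖B‖ * ‖T‖ < 1)
    (hBTA : ∀ x : A.domain, B (T (A x)) = B (x : H))
    (hATB : ∀ y : H, A ⟨T (B y), hT.1 (B y)⟩ = B y) :
    Dense ((A.addBounded B).domain : Set H) ∧ (A.addBounded B).IsClosed ∧
      IsClosed ((A.addBounded B).ran : Set H) ∧
      (A.addBounded B).ran = (A.addBounded B).adjoint.ran := by
  have hS : ∀ x : A.domain, (A.addBounded B) x = A x + B (x : H) := fun x => rfl
  have hlt : ‖-(B * T)‖ < 1 := by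
    rw [norm_neg]
    exact lt_of_le_of_lt (norm_mul_le B T) hnorm
  have hU : IsUnit (1 + B * T) := by
    have h := isUnit_one_sub_of_norm_lt_one hlt
    rwa [sub_neg_eq_add] at h
  obtain ⟨u, hu⟩ := hU
  have hSU : ∀ x : A.domain, (A.addBounded B) x = (u : H →L[ℂ] H) (A x) := by
    intro x
    rw [hS, hu, ← hBTA x]
    rfl
  have huv : ∀ z : H, (u : H →L[ℂ] H) ((↑u⁻¹ : H →L[ℂ] H) z) = z := by
    intro z
    have h := congrArg (fun f : H →L[ℂ] H => f z) u.mul_inv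
    exact h
  have hua : ∀ z : H, (u : H →L[ℂ] H) z = z + B (T z) := by
    intro z
    rw [hu]
    rfl
  have hB : ∀ y : H, B y ∈ A.ran := fun y => ⟨⟨T (B y), hT.1 (B y)⟩, hATB y⟩
  have hran : (A.addBounded B).ran = A.ran := by
    apply le_antisymm
    · rintro _ ⟨x, rfl⟩
      exact A.ran.add_mem ⟨x, rfl⟩ (hB _)
    · intro y hy
      have h1 := huv y
      rw [hua] at h1
      have hz : (↑u⁻¹ : H →L[ℂ] H) y ∈ A.ran := by
        rw [eq_sub_of_add_eq h1]
        exact A.ran.sub_mem hy (hB _)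
      obtain ⟨x, hx⟩ := hz
      refine ⟨x, ?_⟩
      have h2 := hSU x
      change A x = _ at hx
      rw [hx, huv] at h2
      exact h2
  refine ⟨hd, ?_, ?_, ?_⟩
  · have hg : ((A.addBounded B).graph : Set (H × H)) =
        (fun p : H × H => (p.1, p.2 - B p.1)) ⁻¹' (A.graph : Set (H × H)) := by
      ext ⟨a, b⟩
      simp only [SetLike.mem_coe, Set.mem_preimage, LinearPMap.mem_graph_iff]
      constructor
      · rintro ⟨x, hx, hb⟩
        have hx' : (x : H) = a := hx
        have hb' : (A.addBounded B) x = b := hb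
        refine ⟨x, hx', ?_⟩
        rw [← hb', ← hx']
        exact (add_sub_cancel_right (A x) (B (x : H))).symm
      · rintro ⟨x, hx, hb⟩
        refine ⟨x, hx, ?_⟩
        have h := hS x
        have hx' : (x : H) = a := hx
        have hb' : A x = b - B a := hb
        rw [hb', hx', sub_add_cancel] at h
        exact h
    unfold LinearPMap.IsClosed
    rw [hg]
    exact hc.preimage (by fun_prop)
  · rw [hran]; exact hr
  · rw [hran, hEP]
    ext w
    rw [mem_adjoint_ran_iff A hd, mem_adjoint_ran_iff (A.addBounded B) hd]
    constructor
    · rintro ⟨y, hy⟩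
      refine ⟨ContinuousLinearMap.adjoint (↑u⁻¹ : H →L[ℂ] H) y, fun x => ?_⟩
      have h1 := hSU x
      have hvu : (↑u⁻¹ : H →L[ℂ] H) ((u : H →L[ℂ] H) (A x)) = A x :=
        congrArg (fun f : H →L[ℂ] H => f (A x)) u.inv_mul
      rw [h1, ContinuousLinearMap.adjoint_inner_left, hvu]
      exact hy x
    · rintro ⟨y, hy⟩
      refine ⟨ContinuousLinearMap.adjoint (u : H →L[ℂ] H) y, fun x => ?_⟩
      rw [ContinuousLinearMap.adjoint_inner_left, ← hSU x]
      exact hy x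
end
end
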